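/- arXiv:1812.09640 — 2 statements merged into one kernel-verified Lean document; each statement's English description precedes it below -/
import Mathlib

section
/- Fix a full-support pmf μ on the finite set X and β ∈ (0,1). Then the Rényi mutual information p ↦ I_β(p) = (1/(β−1))·ln( ∑_{x,a} p(x,a)^β μ(x)^{1−β} q_p(a)^{1−β} ), where q_p(a) = ∑_x p(x,a), is a convex function on the convex set of full-support joint pmfs p on X×A whose X-marginal equals μ. Consequently, for every κ_max > 0 the feasible set { p : p full-support joint pmf, ∑_a p(x,a) = μ(x) for all x, I_β(p) ≤ κ_max } is convex. -/
open Finset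

/-- The order-`β` Rényi mutual information of a joint pmf `p` on `X × A` whose
`X`-marginal is the fixed prior `μ`:
`I_β(p) = (1/(β−1)) ln( ∑_{x,a} p(x,a)^β μ(x)^{1−β} q_p(a)^{1−β} )`
where `q_p(a) = ∑_x p(x,a)`. -/
noncomputable def renyiMI {X A : Type*} [Fintype X] [Fintype A]
    (β : ℝ) (μ : X → ℝ) (p : X → A → ℝ) : ℝ :=
  (1/(β-1)) * Real.log (∑ x, ∑ a,
    (p x a) ^ β * (μ x) ^ (1-β) * (∑ y, p y a) ^ (1-β))

/-!
Up to the factor `1 / (β - 1) < 0`, `I_β` is the logarithm of the affinity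
`∑ p(x,a)^β μ(x)^{1-β} q_p(a)^{1-β}`. Since `p(x,a)` and `q_p(a)` are linear in `p`, each summand
is a weighted geometric mean of nonnegative linear functions of `p`, which is concave by Hölder's
inequality. The affinity is positive at every joint pmf, even one with zero entries, and the
logarithm is concave and increasing on the positive reals, so it preserves concavity; the negative
factor turns concavity into convexity.
-/

lemma sum_rpow_mul_rpow_le {ι : Type*} {s : Finset ι} {f g : ι → ℝ} {b c : ℝ}
    (hb : 0 < b) (hc : 0 < c) (hbc : b + c = 1)
    (hf : ∀ i ∈ s, 0 ≤ f i) (hg : ∀ i ∈ s, 0 ≤ g i) :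
    ∑ i ∈ s, f i ^ b * g i ^ c ≤ (∑ i ∈ s, f i) ^ b * (∑ i ∈ s, g i) ^ c := by
  have holder := Real.inner_le_Lp_mul_Lq_of_nonneg s (Real.HolderConjugate.inv_inv hb hc hbc)
    (fun i hi ↦ Real.rpow_nonneg (hf i hi) b) (fun i hi ↦ Real.rpow_nonneg (hg i hi) c)
  rwa [sum_congr rfl fun i hi ↦ Real.rpow_rpow_inv (hf i hi) hb.ne',
    sum_congr rfl fun i hi ↦ Real.rpow_rpow_inv (hg i hi) hc.ne',
    one_div, one_div, inv_inv, inv_inv] at holder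

section Concavity

variable {E : Type*} [AddCommMonoid E] [Module ℝ E] {s : Set E}

lemma concaveOn_rpow_mul_rpow {f g : E → ℝ} {b c : ℝ} (hb : 0 < b) (hc : 0 < c)
    (hbc : b + c = 1) (hf : ConcaveOn ℝ s f) (hg : ConcaveOn ℝ s g)
    (hf₀ : ∀ x ∈ s, 0 ≤ f x) (hg₀ : ∀ x ∈ s, 0 ≤ g x) :
    ConcaveOn ℝ s fun x ↦ f x ^ b * g x ^ c := by
  refine ⟨hf.1, fun x hx y hy t u ht hu htu ↦ ?_⟩
  have homogeneous {r v w : ℝ} (hr : 0 ≤ r) (hv : 0 ≤ v) (hw : 0 ≤ w) :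
      r * (v ^ b * w ^ c) = (r * v) ^ b * (r * w) ^ c := by
    rw [Real.mul_rpow hr hv, Real.mul_rpow hr hw, mul_mul_mul_comm,
      ← Real.rpow_add_of_nonneg hr hb.le hc.le, hbc, Real.rpow_one]
  have hmem : t • x + u • y ∈ s := hf.1 hx hy ht hu htu
  have hfx := hf₀ x hx
  have hfy := hf₀ y hy
  have hgx := hg₀ x hx
  have hgy := hg₀ y hy
  calc t * (f x ^ b * g x ^ c) + u * (f y ^ b * g y ^ c)
      = (t * f x) ^ b * (t * g x) ^ c + (u * f y) ^ b * (u * g y) ^ c := by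
        rw [homogeneous ht hfx hgx, homogeneous hu hfy hgy]
    _ ≤ (t * f x + u * f y) ^ b * (t * g x + u * g y) ^ c := by
        simpa [Fin.forall_fin_two, mul_nonneg, *] using
          sum_rpow_mul_rpow_le (s := univ) (f := ![t * f x, u * f y]) (g := ![t * g x, u * g y])
            hb hc hbc
    _ ≤ f (t • x + u • y) ^ b * g (t • x + u • y) ^ c := by
        gcongr
        · exact Real.rpow_nonneg (hf₀ _ hmem) b
        · exact hf.2 hx hy ht hu htu
        · exact hg.2 hx hy ht hu htu

lemma concaveOn_sum {ι : Type*} {f : ι → E → ℝ} {I : Finset ι} (hs : Convex ℝ s)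
    (hf : ∀ i ∈ I, ConcaveOn ℝ s (f i)) : ConcaveOn ℝ s fun x ↦ ∑ i ∈ I, f i x := by
  refine ⟨hs, fun x hx y hy t u ht hu htu ↦ ?_⟩
  simp only [smul_sum, ← sum_add_distrib]
  exact sum_le_sum fun i hi ↦ (hf i hi).2 hx hy ht hu htu

lemma concaveOn_log_comp {f : E → ℝ} (hf : ConcaveOn ℝ s f) :
    ConcaveOn ℝ {x ∈ s | 0 < f x} fun x ↦ Real.log (f x) := by
  refine ⟨hf.convex_gt 0, fun x hx y hy t u ht hu htu ↦ ?_⟩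
  have hmean : t • f x + u • f y ∈ Set.Ioi 0 := convex_Ioi (0 : ℝ) hx.2 hy.2 ht hu htu
  exact (strictConcaveOn_log_Ioi.concaveOn.2 hx.2 hy.2 ht hu htu).trans
    (Real.log_le_log hmean (hf.2 hx.1 hy.1 ht hu htu))

end Concavity

lemma convex_setOf_forall_pos {X A : Type*} : Convex ℝ {p : X → A → ℝ | ∀ x a, 0 < p x a} :=
  fun _ hp _ hr _ _ ht hu htu x a ↦ convex_Ioi (0 : ℝ) (hp x a) (hr x a) ht hu htu

lemma setOf_forall_pos_and_eq_inter {X A : Type*} (P : (X → A → ℝ) → Prop) :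
    {p | (∀ x a, 0 < p x a) ∧ P p} =
      {p | ∀ x a, 0 < p x a} ∩ {p | (∀ x a, 0 ≤ p x a) ∧ P p} :=
  Set.ext fun _ ↦ and_congr_right fun hp ↦ (and_iff_right fun x a ↦ (hp x a).le).symm

section Renyi

variable {X A : Type*} [Fintype X] [Fintype A]

/-- The order-`β` affinity `∑_{x,a} p(x,a)^β (μ(x) q_p(a))^{1-β}` between `p` and the product of
`μ` with the `A`-marginal `q_p` of `p`; it is the argument of the logarithm in `renyiMI`. -/
noncomputable def renyiAffinity (β : ℝ) (μ : X → ℝ) (p : X → A → ℝ) : ℝ :=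
  ∑ x, ∑ a, p x a ^ β * μ x ^ (1 - β) * (∑ y, p y a) ^ (1 - β)

/-- The joint pmfs on `X × A`, in curried form and not necessarily of full support, whose
`X`-marginal is `μ`. -/
def jointPMFs (A : Type*) [Fintype A] (μ : X → ℝ) : Set (X → A → ℝ) :=
  {p | (∀ x a, 0 ≤ p x a) ∧ (∑ x, ∑ a, p x a = 1) ∧ (∀ x, ∑ a, p x a = μ x)}

variable {β : ℝ} {μ : X → ℝ}

lemma concaveOn_renyiAffinity (hβ : β ∈ Set.Ioo (0 : ℝ) 1) (hμ : ∀ x, 0 ≤ μ x) :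
    ConcaveOn ℝ (Set.Ici (0 : X → A → ℝ)) (renyiAffinity β μ) := by
  have hconv : Convex ℝ (Set.Ici (0 : X → A → ℝ)) := convex_Ici 0
  have hentry (x : X) (a : A) : ConcaveOn ℝ (Set.Ici (0 : X → A → ℝ)) fun p ↦ p x a :=
    (LinearMap.proj a ∘ₗ LinearMap.proj x : (X → A → ℝ) →ₗ[ℝ] ℝ).concaveOn hconv
  refine concaveOn_sum hconv fun x _ ↦ concaveOn_sum hconv fun a _ ↦ ?_
  have hgeom := concaveOn_rpow_mul_rpow hβ.1 (sub_pos.2 hβ.2) (add_sub_cancel β 1)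
    (hentry x a) (concaveOn_sum hconv fun y (_ : y ∈ univ) ↦ hentry y a)
    (fun p hp ↦ hp x a) (fun p hp ↦ sum_nonneg fun y _ ↦ hp y a)
  simpa only [smul_eq_mul, mul_left_comm, mul_assoc] using
    hgeom.smul (Real.rpow_nonneg (hμ x) (1 - β))

lemma convexOn_renyiMI (hβ : β ∈ Set.Ioo (0 : ℝ) 1) (hμ : ∀ x, 0 ≤ μ x) :
    ConvexOn ℝ {p ∈ Set.Ici (0 : X → A → ℝ) | 0 < renyiAffinity β μ p} (renyiMI β μ) := by
  have hlog := concaveOn_log_comp (concaveOn_renyiAffinity (A := A) hβ hμ)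
  have hfactor : 0 ≤ -(1 / (β - 1)) :=
    neg_nonneg.2 (one_div_nonpos.2 (sub_nonpos.2 hβ.2.le))
  refine (hlog.neg.smul hfactor).congr fun p _ ↦ ?_
  simp only [Pi.neg_apply, smul_eq_mul, neg_mul_neg, renyiMI, renyiAffinity]

lemma renyiAffinity_pos_of_mem_jointPMFs {p : X → A → ℝ} (hp : p ∈ jointPMFs A μ) :
    0 < renyiAffinity β μ p := by
  obtain ⟨hp₀, hp₁, hpμ⟩ := hp
  have hμ₀ (x : X) : 0 ≤ μ x := hpμ x ▸ sum_nonneg fun a _ ↦ hp₀ x a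
  have hq₀ (a : A) : 0 ≤ ∑ y, p y a := sum_nonneg fun y _ ↦ hp₀ y a
  have hterm (x : X) (a : A) : 0 ≤ p x a ^ β * μ x ^ (1 - β) * (∑ y, p y a) ^ (1 - β) :=
    mul_nonneg (mul_nonneg (Real.rpow_nonneg (hp₀ x a) _) (Real.rpow_nonneg (hμ₀ x) _))
      (Real.rpow_nonneg (hq₀ a) _)
  obtain ⟨x, -, hx⟩ : ∃ x ∈ univ, 0 < ∑ a, p x a :=
    exists_lt_of_sum_lt (by simp [hp₁])
  obtain ⟨a, -, hxa⟩ : ∃ a ∈ univ, 0 < p x a :=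
    exists_lt_of_sum_lt (by simpa using hx)
  have hq : 0 < ∑ y, p y a := sum_pos' (fun y _ ↦ hp₀ y a) ⟨x, mem_univ x, hxa⟩
  refine sum_pos' (fun x _ ↦ sum_nonneg fun a _ ↦ hterm x a) ⟨x, mem_univ x, ?_⟩
  refine sum_pos' (fun a _ ↦ hterm x a) ⟨a, mem_univ a, ?_⟩
  exact mul_pos (mul_pos (Real.rpow_pos_of_pos hxa _) (Real.rpow_pos_of_pos (hpμ x ▸ hx) _))
    (Real.rpow_pos_of_pos hq _)

lemma convex_jointPMFs : Convex ℝ (jointPMFs A μ) := by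
  rintro p ⟨hp₀, hp₁, hpμ⟩ r ⟨hr₀, hr₁, hrμ⟩ t u ht hu htu
  refine ⟨convex_Ici (0 : X → A → ℝ) hp₀ hr₀ ht hu htu, ?_, fun x ↦ ?_⟩
  · simp only [Pi.add_apply, Pi.smul_apply, smul_eq_mul, sum_add_distrib, ← mul_sum, hp₁, hr₁,
      mul_one, htu]
  · simp only [Pi.add_apply, Pi.smul_apply, smul_eq_mul, sum_add_distrib, ← mul_sum, hpμ, hrμ,
      ← add_mul, htu, one_mul]

theorem renyiMI_convexOn_and_feasible_set_convex_general
    (hβ : β ∈ Set.Ioo (0 : ℝ) 1) (hμ : ∀ x, 0 ≤ μ x) :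
    ConvexOn ℝ (jointPMFs A μ) (renyiMI β μ) ∧
      ∀ κ : ℝ, Convex ℝ {p ∈ jointPMFs A μ | renyiMI β μ p ≤ κ} := by
  have hconv : ConvexOn ℝ (jointPMFs A μ) (renyiMI β μ) :=
    (convexOn_renyiMI hβ hμ).subset
      (fun _ hp ↦ ⟨hp.1, renyiAffinity_pos_of_mem_jointPMFs hp⟩) convex_jointPMFs
  exact ⟨hconv, hconv.convex_le⟩

end Renyi

/-- For fixed full-support prior `μ` and `β ∈ (0,1)`, the Rényi mutual information is a
convex function on the convex set of full-support joint pmfs with `X`-marginal `μ`;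
consequently, for every `κ_max > 0` the feasible set of the information-constrained
optimization problem is convex. -/
theorem renyiMI_convexOn_and_feasible_set_convex
    {X A : Type*} [Fintype X] [Fintype A] [Nonempty X] [Nonempty A]
    (β : ℝ) (hβ : β ∈ Set.Ioo (0:ℝ) 1)
    (μ : X → ℝ) (hμpos : ∀ x, 0 < μ x) (hμsum : ∑ x, μ x = 1) :
    (ConvexOn ℝ
      {p : X → A → ℝ | (∀ x a, 0 < p x a) ∧ (∑ x, ∑ a, p x a = 1) ∧
        (∀ x, ∑ a, p x a = μ x)}
      (renyiMI β μ))
    ∧ (∀ κmax : ℝ, 0 < κmax →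
        Convex ℝ
          {p : X → A → ℝ | (∀ x a, 0 < p x a) ∧ (∑ x, ∑ a, p x a = 1) ∧
            (∀ x, ∑ a, p x a = μ x) ∧ renyiMI β μ p ≤ κmax}) := by
  obtain ⟨hconv, hfeasible⟩ :=
    renyiMI_convexOn_and_feasible_set_convex_general (A := A) hβ fun x ↦ (hμpos x).le
  simp only [jointPMFs, Set.mem_ofPred_eq, and_assoc] at hconv hfeasible
  simp only [setOf_forall_pos_and_eq_inter]
  exact ⟨hconv.subset Set.inter_subset_right (convex_setOf_forall_pos.inter hconv.1),
    fun κmax _ ↦ convex_setOf_forall_pos.inter (hfeasible κmax)⟩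
end

section
/- Let I be a finite nonempty index set and β > 1. The order-β Rényi divergence D_β(P‖Q) = (1/(β−1))·ln( ∑_{i∈I} P_i^β Q_i^{1−β} ) is jointly quasi-convex on pairs of full-support pmfs on I: for all full-support pmfs P₀, P₁, Q₀, Q₁ on I and all t ∈ [0,1], D_β( tP₁ + (1−t)P₀ ‖ tQ₁ + (1−t)Q₀ ) ≤ max( D_β(P₁‖Q₁), D_β(P₀‖Q₀) ). -/
open Finset

/-!
For positive `q`, `p ^ β * q ^ (1 - β) = q * (p / q) ^ β` is the perspective of the convex function
`x ↦ x ^ β`, hence jointly convex in `(p, q)`. Summing over the index set gives a jointly convex,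
hence jointly quasiconvex, function of `(P, Q)`, and quasiconvexity (unlike convexity) survives
composition with the increasing function `(β - 1)⁻¹ * log`.
-/

section Convexity

variable {𝕜 E F ι : Type*}

theorem convexOn_sum [Semiring 𝕜] [PartialOrder 𝕜] [AddCommMonoid E] [SMul 𝕜 E]
    [AddCommMonoid F] [PartialOrder F] [IsOrderedAddMonoid F] [Module 𝕜 F]
    {s : Set E} (hs : Convex 𝕜 s) {t : Finset ι} {f : ι → E → F}
    (hf : ∀ i ∈ t, ConvexOn 𝕜 s (f i)) : ConvexOn 𝕜 s (∑ i ∈ t, f i) :=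
  sum_induction f (ConvexOn 𝕜 s) (fun _ _ => ConvexOn.add) (convexOn_const 0 hs) hf

theorem quasiconvexOn_comp_of_monotoneOn [Semiring 𝕜] [PartialOrder 𝕜] [AddCommMonoid E] [SMul 𝕜 E]
    {α γ : Type*} [LinearOrder α] [LinearOrder γ] {s : Set E} {u : Set α} {f : E → α} {g : α → γ}
    (hg : MonotoneOn g u) (hf : QuasiconvexOn 𝕜 s f) (hfu : Set.MapsTo f s u) :
    QuasiconvexOn 𝕜 s (g ∘ f) := by
  obtain ⟨hs, hf_le⟩ := quasiconvexOn_iff_le_max.1 hf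
  refine quasiconvexOn_iff_le_max.2 ⟨hs, fun x hx y hy a b ha hb hab => ?_⟩
  have hmax : max (f x) (f y) ∈ u := max_rec' (· ∈ u) (hfu hx) (hfu hy)
  calc g (f (a • x + b • y)) ≤ g (max (f x) (f y)) :=
        hg (hfu (hs hx hy ha hb hab)) hmax (hf_le hx hy ha hb hab)
    _ = max (g (f x)) (g (f y)) := hg.map_max (hfu hx) (hfu hy)

variable [Field 𝕜] [AddCommMonoid E] [Module 𝕜 E]

/-- The perspective `(x, r) ↦ r • f (x / r)` of `f`, the homogeneous function of degree one that
restricts to `f` at `r = 1`. It is meaningful for `0 < r` only. -/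
def perspective [SMul 𝕜 F] (f : E → F) (x : E × 𝕜) : F :=
  x.2 • f (x.2⁻¹ • x.1)

theorem inv_smul_combo_eq {r₁ r₂ : 𝕜} (h₁ : r₁ ≠ 0) (h₂ : r₂ ≠ 0) (c a b : 𝕜) (x y : E) :
    c⁻¹ • (a • x + b • y) =
      (c⁻¹ * (a * r₁)) • (r₁⁻¹ • x) + (c⁻¹ * (b * r₂)) • (r₂⁻¹ • y) := by
  simp only [smul_add, smul_smul, mul_assoc, mul_inv_cancel₀ h₁, mul_inv_cancel₀ h₂, mul_one]

theorem convexOn_perspective [LinearOrder 𝕜] [IsStrictOrderedRing 𝕜]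
    [AddCommMonoid F] [PartialOrder F] [Module 𝕜 F] [PosSMulMono 𝕜 F]
    {s : Set E} {f : E → F} (hf : ConvexOn 𝕜 s f) :
    ConvexOn 𝕜 {x : E × 𝕜 | 0 < x.2 ∧ x.2⁻¹ • x.1 ∈ s} (perspective f) := by
  set S := {x : E × 𝕜 | 0 < x.2 ∧ x.2⁻¹ • x.1 ∈ s}
  suffices h : ∀ ⦃x⦄, x ∈ S → ∀ ⦃y⦄, y ∈ S → ∀ ⦃a b : 𝕜⦄, 0 ≤ a → 0 ≤ b → a + b = 1 →
      a • x + b • y ∈ S ∧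
        perspective f (a • x + b • y) ≤ a • perspective f x + b • perspective f y from
    ⟨fun x hx y hy a b ha hb hab => (h hx hy ha hb hab).1,
      fun x hx y hy a b ha hb hab => (h hx hy ha hb hab).2⟩
  rintro ⟨x, r₁⟩ ⟨h₁ : 0 < r₁, hx⟩ ⟨y, r₂⟩ ⟨h₂ : 0 < r₂, hy⟩ a b ha hb hab
  set c := a * r₁ + b * r₂ with hc_def
  have hc : 0 < c := convex_Ioi (𝕜 := 𝕜) 0 h₁ h₂ ha hb hab
  have hc_inv : 0 ≤ c⁻¹ := inv_nonneg.2 hc.le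
  have hw₁ : 0 ≤ c⁻¹ * (a * r₁) := mul_nonneg hc_inv (mul_nonneg ha h₁.le)
  have hw₂ : 0 ≤ c⁻¹ * (b * r₂) := mul_nonneg hc_inv (mul_nonneg hb h₂.le)
  have hw : c⁻¹ * (a * r₁) + c⁻¹ * (b * r₂) = 1 := by
    rw [← mul_add, ← hc_def, inv_mul_cancel₀ hc.ne']
  have hcombo := inv_smul_combo_eq h₁.ne' h₂.ne' c a b x y
  refine ⟨⟨hc, ?_⟩, ?_⟩
  · change c⁻¹ • (a • x + b • y) ∈ s
    exact hcombo ▸ hf.1 hx hy hw₁ hw₂ hw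
  · calc c • f (c⁻¹ • (a • x + b • y))
        ≤ c • ((c⁻¹ * (a * r₁)) • f (r₁⁻¹ • x) + (c⁻¹ * (b * r₂)) • f (r₂⁻¹ • y)) :=
          smul_le_smul_of_nonneg_left (hcombo ▸ hf.2 hx hy hw₁ hw₂ hw) hc.le
      _ = a • r₁ • f (r₁⁻¹ • x) + b • r₂ • f (r₂⁻¹ • y) := by
          simp only [smul_add, smul_smul, mul_inv_cancel_left₀ hc.ne']

end Convexity

theorem rpow_mul_rpow_one_sub_eq_perspective (β : ℝ) {p q : ℝ} (hp : 0 ≤ p) (hq : 0 < q) :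
    p ^ β * q ^ (1 - β) = perspective (fun x : ℝ => x ^ β) (p, q) := by
  simp only [perspective, smul_eq_mul]
  rw [Real.mul_rpow (inv_nonneg.2 hq.le) hp, Real.inv_rpow hq.le, Real.rpow_sub hq, Real.rpow_one]
  ring

theorem convexOn_rpow_mul_rpow_one_sub {β : ℝ} (hβ : 1 ≤ β) :
    ConvexOn ℝ (Set.Ici 0 ×ˢ Set.Ioi 0) fun x : ℝ × ℝ => x.1 ^ β * x.2 ^ (1 - β) := by
  refine ((convexOn_perspective (convexOn_rpow hβ)).subset ?_
    ((convex_Ici 0).prod (convex_Ioi 0))).congr fun x hx =>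
      (rpow_mul_rpow_one_sub_eq_perspective β hx.1 hx.2).symm
  exact fun x ⟨hp, hq⟩ => ⟨hq, Set.mem_Ici.2 (mul_nonneg (inv_nonneg.2 (le_of_lt hq)) hp)⟩

section RenyiDivergence

variable {I : Type*} [Fintype I] {β : ℝ}

/-- The Hellinger integral `∑ i, P i ^ β * Q i ^ (1 - β)` of order `β`, whose logarithm is the
Rényi divergence up to a factor. Its arguments are arbitrary real-valued functions on `I`. -/
noncomputable def hellingerIntegral (β : ℝ) (P Q : I → ℝ) : ℝ :=
  ∑ i, P i ^ β * Q i ^ (1 - β)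

/-- The Rényi divergence of order `β` of `P` from `Q`, with no normalization imposed on `P`
and `Q`. -/
noncomputable def renyiDiv (β : ℝ) (P Q : I → ℝ) : ℝ :=
  1 / (β - 1) * Real.log (hellingerIntegral β P Q)

theorem hellingerIntegral_pos (β : ℝ) {P Q : I → ℝ} (hP : 0 < P) (hQ : ∀ i, 0 < Q i) :
    0 < hellingerIntegral β P Q := by
  obtain ⟨hP_nonneg, i, hi⟩ := Pi.lt_def.1 hP
  exact sum_pos' (fun j _ => mul_nonneg (Real.rpow_nonneg (hP_nonneg j) _)
      (Real.rpow_nonneg (hQ j).le _))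
    ⟨i, mem_univ i, mul_pos (Real.rpow_pos_of_pos hi _) (Real.rpow_pos_of_pos (hQ i) _)⟩

theorem convexOn_hellingerIntegral (hβ : 1 ≤ β) :
    ConvexOn ℝ (Set.Ici 0 ×ˢ Set.univ.pi fun _ => Set.Ioi 0)
      fun x : (I → ℝ) × (I → ℝ) => hellingerIntegral β x.1 x.2 := by
  have hs : Convex ℝ ((Set.Ici 0 : Set (I → ℝ)) ×ˢ Set.univ.pi fun _ : I => Set.Ioi (0 : ℝ)) :=
    (convex_Ici 0).prod (convex_pi fun _ _ => convex_Ioi 0)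
  have hterm (i : I) : ConvexOn ℝ (Set.Ici 0 ×ˢ Set.univ.pi fun _ => Set.Ioi 0)
      fun x : (I → ℝ) × (I → ℝ) => x.1 i ^ β * x.2 i ^ (1 - β) := by
    let coords : (I → ℝ) × (I → ℝ) →ₗ[ℝ] ℝ × ℝ := (LinearMap.proj i).prodMap (LinearMap.proj i)
    exact ((convexOn_rpow_mul_rpow_one_sub hβ).comp_linearMap coords).subset
      (fun x hx => ⟨hx.1 i, hx.2 i (Set.mem_univ i)⟩) hs
  exact (convexOn_sum hs fun i _ => hterm i).congr fun x _ => sum_apply x univ _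

theorem renyi_divergence_jointly_quasiconvex_general (hβ : 1 < β) :
    QuasiconvexOn ℝ (Set.Ioi 0 ×ˢ Set.univ.pi fun _ => Set.Ioi 0)
      fun x : (I → ℝ) × (I → ℝ) => renyiDiv β x.1 x.2 := by
  have hconvex : ConvexOn ℝ (Set.Ioi 0 ×ˢ Set.univ.pi fun _ => Set.Ioi 0)
      fun x : (I → ℝ) × (I → ℝ) => hellingerIntegral β x.1 x.2 :=
    (convexOn_hellingerIntegral hβ.le).subset (Set.prod_mono_left Set.Ioi_subset_Ici_self)
      ((convex_Ioi 0).prod (convex_pi fun _ _ => convex_Ioi 0))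
  have hmono : MonotoneOn (fun h => 1 / (β - 1) * Real.log h) (Set.Ioi 0) :=
    (monotone_mul_left_of_nonneg (one_div_nonneg.2 (sub_nonneg.2 hβ.le))).comp_monotoneOn
      Real.strictMonoOn_log.monotoneOn
  have hquasi := quasiconvexOn_comp_of_monotoneOn hmono hconvex.quasiconvexOn fun x hx =>
    hellingerIntegral_pos β hx.1 fun i => hx.2 i (Set.mem_univ i)
  exact hquasi

end RenyiDivergence

/-- For `β > 1`, the order-`β` Rényi divergence is jointly quasi-convex on pairs of
full-support pmfs on a finite set. -/
theorem renyi_divergence_jointly_quasiconvex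
    {I : Type*} [Fintype I] [Nonempty I]
    (β : ℝ) (hβ : 1 < β)
    (P₀ P₁ Q₀ Q₁ : I → ℝ)
    (hP₀pos : ∀ i, 0 < P₀ i) (hP₀sum : ∑ i, P₀ i = 1)
    (hP₁pos : ∀ i, 0 < P₁ i) (hP₁sum : ∑ i, P₁ i = 1)
    (hQ₀pos : ∀ i, 0 < Q₀ i) (hQ₀sum : ∑ i, Q₀ i = 1)
    (hQ₁pos : ∀ i, 0 < Q₁ i) (hQ₁sum : ∑ i, Q₁ i = 1)
    (t : ℝ) (ht : t ∈ Set.Icc (0:ℝ) 1) :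
    (1/(β-1)) * Real.log
        (∑ i, (t * P₁ i + (1-t) * P₀ i) ^ β * (t * Q₁ i + (1-t) * Q₀ i) ^ (1-β))
      ≤ max ((1/(β-1)) * Real.log (∑ i, (P₁ i) ^ β * (Q₁ i) ^ (1-β)))
            ((1/(β-1)) * Real.log (∑ i, (P₀ i) ^ β * (Q₀ i) ^ (1-β))) := by
  exact (quasiconvexOn_iff_le_max.1 (renyi_divergence_jointly_quasiconvex_general hβ)).2
    (x := (P₁, Q₁)) ⟨lt_of_strongLT hP₁pos, fun i _ => hQ₁pos i⟩
    (y := (P₀, Q₀)) ⟨lt_of_strongLT hP₀pos, fun i _ => hQ₀pos i⟩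
    ht.1 (sub_nonneg.2 ht.2) (add_sub_cancel t 1)
end
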